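/- arXiv:math/0507472 — 2 statements merged into one kernel-verified Lean document; each statement's English description precedes it below -/
import Mathlib

section
/- Let S be a finite set of points in ℝ². Then S has infinite order under T (i.e., the sequence T⁰(S), T¹(S), T²(S), … never stabilizes) if and only if the union ⋃_{i ≥ 0} Tⁱ(S) is dense in ℝ². -/
open Set Filter

noncomputable section

/-- The line through two points in the plane `ℝ × ℝ`. -/
def line (a b : ℝ × ℝ) : AffineSubspace ℝ (ℝ × ℝ) := affineSpan ℝ {a, b}

/-- The intersection operation `T`: the set of all intersection points of pairs of
distinct lines through pairs of distinct points of `S`. -/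
def interT (S : Set (ℝ × ℝ)) : Set (ℝ × ℝ) :=
  {x | ∃ a ∈ S, ∃ b ∈ S, ∃ c ∈ S, ∃ d ∈ S,
    a ≠ b ∧ c ≠ d ∧ line a b ≠ line c d ∧ x ∈ line a b ∧ x ∈ line c d}


/-- Twice the signed area of a triangle. -/
def cr (a b x : ℝ × ℝ) : ℝ := (b.1 - a.1) * (x.2 - a.2) - (b.2 - a.2) * (x.1 - a.1)

lemma mem_line_iff {a b : ℝ × ℝ} (hab : a ≠ b) (x : ℝ × ℝ) : x ∈ line a b ↔ cr a b x = 0 := by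
  unfold line cr
  rw [mem_affineSpan_pair_iff_exists_lineMap_eq]
  constructor
  · rintro ⟨r, rfl⟩
    simp [AffineMap.lineMap_apply]
    ring
  · intro h
    by_cases h1 : b.1 - a.1 = 0
    · have h2 : b.2 - a.2 ≠ 0 := by
        intro h2
        exact hab (Prod.ext (by linarith) (by linarith))
      refine ⟨(x.2 - a.2) / (b.2 - a.2), ?_⟩
      have h3 : x.1 - a.1 = 0 := by
        rw [h1] at h
        have : (b.2 - a.2) * (x.1 - a.1) = 0 := by linarith
        exact (mul_eq_zero.1 this).resolve_left h2
      apply Prod.ext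
      · simp [AffineMap.lineMap_apply, h1]; linarith
      · simp [AffineMap.lineMap_apply]; field_simp; ring
    · refine ⟨(x.1 - a.1) / (b.1 - a.1), ?_⟩
      apply Prod.ext
      · simp [AffineMap.lineMap_apply]; field_simp; ring
      · simp [AffineMap.lineMap_apply]; field_simp; linarith

lemma line_eq {p q a b : ℝ × ℝ} (hp : p ∈ line a b) (hq : q ∈ line a b) (h : p ≠ q) :
    line p q = line a b :=
  affineSpan_pair_eq_of_mem_of_mem_of_ne hp hq h

lemma inter_unique {a b c d x y : ℝ × ℝ} (h : line a b ≠ line c d)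
    (hx : x ∈ line a b) (hx' : x ∈ line c d) (hy : y ∈ line a b) (hy' : y ∈ line c d) : x = y := by
  by_contra hne
  exact h ((line_eq hx hy hne).symm.trans (line_eq hx' hy' hne))

lemma ne_of_cr {a b c : ℝ × ℝ} (h : cr a b c ≠ 0) : a ≠ b := by
  rintro rfl
  apply h
  simp [cr]

lemma left_mem (a b : ℝ × ℝ) : a ∈ line a b := left_mem_affineSpan_pair ℝ a b

lemma right_mem (a b : ℝ × ℝ) : b ∈ line a b := right_mem_affineSpan_pair ℝ a b

lemma close_mem {U : Set (ℝ × ℝ)} {a b c d x : ℝ × ℝ} (ha : a ∈ U) (hb : b ∈ U) (hc : c ∈ U)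
    (hd : d ∈ U) (h1 : cr a b x = 0) (h2 : cr c d x = 0) (h3 : cr a b c ≠ 0)
    (h4 : cr c d a ≠ 0) : x ∈ interT U := by
  have hab := ne_of_cr h3
  have hcd := ne_of_cr h4
  refine ⟨a, ha, b, hb, c, hc, d, hd, hab, hcd, ?_, (mem_line_iff hab x).2 h1,
    (mem_line_iff hcd x).2 h2⟩
  intro h
  apply h3
  rw [← mem_line_iff hab, h]
  exact left_mem c d

lemma interT_finite {S : Set (ℝ × ℝ)} (hS : S.Finite) : (interT S).Finite := by
  have : interT S ⊆ ⋃ a ∈ S, ⋃ b ∈ S, ⋃ c ∈ S, ⋃ d ∈ S,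
      {x | line a b ≠ line c d ∧ x ∈ line a b ∧ x ∈ line c d} := by
    rintro x ⟨a, ha, b, hb, c, hc, d, hd, -, -, h⟩
    simp only [mem_iUnion]
    exact ⟨a, ha, b, hb, c, hc, d, hd, h⟩
  refine Set.Finite.subset ?_ this
  refine hS.biUnion fun a _ => hS.biUnion fun b _ => hS.biUnion fun c _ => hS.biUnion fun d _ => ?_
  apply Set.Subsingleton.finite
  rintro x ⟨h, hx, hx'⟩ y ⟨-, hy, hy'⟩
  exact inter_unique h hx hx' hy hy'

lemma subset_interT {S : Set (ℝ × ℝ)} (h : (interT S).Nonempty) : S ⊆ interT S := by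
  obtain ⟨x, a, ha, b, hb, c, hc, d, hd, hab, hcd, hne, -, -⟩ := h
  intro p hp
  have key : ∀ q ∈ S, q ∉ line a b → p ∈ line a b → p ∈ interT S := by
    intro q hq hq' hpl
    have hpq : p ≠ q := by rintro rfl; exact hq' hpl
    refine ⟨a, ha, b, hb, p, hp, q, hq, hab, hpq, ?_, hpl, left_mem p q⟩
    intro h
    exact hq' (h ▸ right_mem p q)
  by_cases hpl : p ∈ line a b
  · by_cases h1 : c ∈ line a b
    · by_cases h2 : d ∈ line a b
      · exact absurd (line_eq h1 h2 hcd).symm hne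
      · exact key d hd h2 hpl
    · exact key c hc h1 hpl
  · have hpa : p ≠ a := by rintro rfl; exact hpl (left_mem _ _)
    have hpb : p ≠ b := by rintro rfl; exact hpl (right_mem _ _)
    refine ⟨p, hp, a, ha, p, hp, b, hb, hpa, hpb, ?_, left_mem _ _, left_mem _ _⟩
    intro h
    apply hpl
    have hb' : b ∈ line p a := h ▸ right_mem p b
    rw [line_eq (right_mem p a) hb' hab]
    exact left_mem _ _

lemma exists_quad {S : Set (ℝ × ℝ)} {x : ℝ × ℝ} (hx : x ∈ interT S) (hxS : x ∉ S) :
    ∃ a ∈ S, ∃ b ∈ S, ∃ c ∈ S, ∃ d ∈ S, cr a b c ≠ 0 ∧ cr a b d ≠ 0 ∧ cr c d a ≠ 0 ∧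
      cr c d b ≠ 0 := by
  obtain ⟨a, ha, b, hb, c, hc, d, hd, hab, hcd, hne, h1, h2⟩ := hx
  refine ⟨a, ha, b, hb, c, hc, d, hd, ?_, ?_, ?_, ?_⟩
  · intro h
    rw [← mem_line_iff hab] at h
    exact hxS (inter_unique hne h1 h2 h (left_mem _ _) ▸ hc)
  · intro h
    rw [← mem_line_iff hab] at h
    exact hxS (inter_unique hne h1 h2 h (right_mem _ _) ▸ hd)
  · intro h
    rw [← mem_line_iff hcd] at h
    exact hxS (inter_unique hne h1 h2 (left_mem _ _) h ▸ ha)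
  · intro h
    rw [← mem_line_iff hcd] at h
    exact hxS (inter_unique hne h1 h2 (right_mem _ _) h ▸ hb)

/-- Determinant of three vectors. -/
def dt (p q r : ℝ × ℝ × ℝ) : ℝ :=
  p.1 * (q.2.1 * r.2.2 - q.2.2 * r.2.1) - p.2.1 * (q.1 * r.2.2 - q.2.2 * r.1)
    + p.2.2 * (q.1 * r.2.1 - q.2.1 * r.1)

/-- Dehomogenised point with weights `v` with respect to weighted points `A, B, C`. -/
def hom (A B C v : ℝ × ℝ × ℝ) : ℝ × ℝ × ℝ := v.1 • A + v.2.1 • B + v.2.2 • C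

def proj (v : ℝ × ℝ × ℝ) : ℝ × ℝ := (v.1 / v.2.2, v.2.1 / v.2.2)

lemma cr_proj {p q r : ℝ × ℝ × ℝ} (hp : p.2.2 ≠ 0) (hq : q.2.2 ≠ 0) (hr : r.2.2 ≠ 0) :
    cr (proj p) (proj q) (proj r) * (p.2.2 * q.2.2 * r.2.2) = dt p q r := by
  simp only [cr, proj, dt]
  field_simp
  ring

lemma dt_hom (A B C p q r : ℝ × ℝ × ℝ) :
    dt (hom A B C p) (hom A B C q) (hom A B C r) = dt A B C * dt p q r := by
  simp [hom, dt]
  ring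

lemma proj_smul {k : ℝ} (hk : k ≠ 0) (v : ℝ × ℝ × ℝ) : proj (k • v) = proj v := by
  simp [proj, mul_div_mul_left _ _ hk]

/-- Abstract rational closure. -/
lemma rat_closure (Q : ℝ × ℝ × ℝ → Prop) (s : ℝ × ℝ × ℝ → ℝ)
    (hs : ∀ v : ℝ × ℝ × ℝ, 0 ≤ v.1 → 0 ≤ v.2.1 → 0 ≤ v.2.2 → 0 < v.1 + v.2.1 + v.2.2 → s v ≠ 0)
    (hsc : ∀ (k : ℝ) v, k ≠ 0 → Q v → Q (k • v))
    (hcl : ∀ p q r t x, s p ≠ 0 → s q ≠ 0 → s r ≠ 0 → s t ≠ 0 → s x ≠ 0 → Q p → Q q → Q r → Q t →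
      dt p q x = 0 → dt r t x = 0 → dt p q r ≠ 0 → dt r t p ≠ 0 → Q x)
    (h1 : Q (1, 0, 0)) (h2 : Q (0, 1, 0)) (h3 : Q (0, 0, 1)) (h0 : Q (1, 1, 1))
    (x y z : ℚ) (hxyz : s (x, y, z) ≠ 0) (hne : (x, y, z) ≠ ((0, 0, 0) : ℚ × ℚ × ℚ)) :
    Q (x, y, z) := by
  have hcl' : ∀ p q r t x : ℝ × ℝ × ℝ,
      (0 ≤ p.1 ∧ 0 ≤ p.2.1 ∧ 0 ≤ p.2.2 ∧ 0 < p.1 + p.2.1 + p.2.2) →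
      (0 ≤ q.1 ∧ 0 ≤ q.2.1 ∧ 0 ≤ q.2.2 ∧ 0 < q.1 + q.2.1 + q.2.2) →
      (0 ≤ r.1 ∧ 0 ≤ r.2.1 ∧ 0 ≤ r.2.2 ∧ 0 < r.1 + r.2.1 + r.2.2) →
      (0 ≤ t.1 ∧ 0 ≤ t.2.1 ∧ 0 ≤ t.2.2 ∧ 0 < t.1 + t.2.1 + t.2.2) →
      (0 ≤ x.1 ∧ 0 ≤ x.2.1 ∧ 0 ≤ x.2.2 ∧ 0 < x.1 + x.2.1 + x.2.2) →
      Q p → Q q → Q r → Q t →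
      dt p q x = 0 → dt r t x = 0 → dt p q r ≠ 0 → dt r t p ≠ 0 → Q x :=
    fun p q r t x hp hq hr ht hx =>
      hcl p q r t x (hs _ hp.1 hp.2.1 hp.2.2.1 hp.2.2.2) (hs _ hq.1 hq.2.1 hq.2.2.1 hq.2.2.2)
        (hs _ hr.1 hr.2.1 hr.2.2.1 hr.2.2.2) (hs _ ht.1 ht.2.1 ht.2.2.1 ht.2.2.2)
        (hs _ hx.1 hx.2.1 hx.2.2.1 hx.2.2.2)
  -- projections from the vertices to the opposite sides
  have pA : ∀ u v w : ℝ, 0 < u → 0 < v → 0 < w → Q (u, v, w) → Q (0, v, w) := by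
    intro u v w hu hv hw h
    refine hcl' (1, 0, 0) (u, v, w) (0, 1, 0) (0, 0, 1) _ ?_ ?_ ?_ ?_ ?_ h1 h h2 h3 ?_ ?_ ?_ ?_ <;>
      simp [dt] <;> first | positivity | (refine ⟨?_, ?_, ?_, ?_⟩ <;> positivity) | (refine ⟨?_, ?_, ?_⟩ <;> positivity) | grind
  have pB : ∀ u v w : ℝ, 0 < u → 0 < v → 0 < w → Q (u, v, w) → Q (u, 0, w) := by
    intro u v w hu hv hw h
    refine hcl' (0, 1, 0) (u, v, w) (1, 0, 0) (0, 0, 1) _ ?_ ?_ ?_ ?_ ?_ h2 h h1 h3 ?_ ?_ ?_ ?_ <;>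
      simp [dt] <;> first | positivity | (refine ⟨?_, ?_, ?_, ?_⟩ <;> positivity) | (refine ⟨?_, ?_, ?_⟩ <;> positivity) | grind
  have pC : ∀ u v w : ℝ, 0 < u → 0 < v → 0 < w → Q (u, v, w) → Q (u, v, 0) := by
    intro u v w hu hv hw h
    refine hcl' (0, 0, 1) (u, v, w) (1, 0, 0) (0, 1, 0) _ ?_ ?_ ?_ ?_ ?_ h3 h h1 h2 ?_ ?_ ?_ ?_ <;>
      simp [dt] <;> first | positivity | (refine ⟨?_, ?_, ?_, ?_⟩ <;> positivity) | (refine ⟨?_, ?_, ?_⟩ <;> positivity) | grind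
  -- recombination
  have rAC : ∀ u v w : ℝ, 0 < u → 0 < v → 0 < w → Q (0, v, w) → Q (u, v, 0) → Q (u, v, w) := by
    intro u v w hu hv hw h h'
    refine hcl' (1, 0, 0) (0, v, w) (0, 0, 1) (u, v, 0) _ ?_ ?_ ?_ ?_ ?_ h1 h h3 h' ?_ ?_ ?_ ?_ <;>
      simp [dt] <;> first | positivity | (refine ⟨?_, ?_, ?_, ?_⟩ <;> positivity) | (refine ⟨?_, ?_, ?_⟩ <;> positivity) | grind
  have rAB : ∀ u v w : ℝ, 0 < u → 0 < v → 0 < w → Q (0, v, w) → Q (u, 0, w) → Q (u, v, w) := by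
    intro u v w hu hv hw h h'
    refine hcl' (1, 0, 0) (0, v, w) (0, 1, 0) (u, 0, w) _ ?_ ?_ ?_ ?_ ?_ h1 h h2 h' ?_ ?_ ?_ ?_ <;>
      simp [dt] <;> first | positivity | (refine ⟨?_, ?_, ?_, ?_⟩ <;> positivity) | (refine ⟨?_, ?_, ?_⟩ <;> positivity) | grind
  have rBC : ∀ u v w : ℝ, 0 < u → 0 < v → 0 < w → Q (u, 0, w) → Q (u, v, 0) → Q (u, v, w) := by
    intro u v w hu hv hw h h'
    refine hcl' (0, 1, 0) (u, 0, w) (0, 0, 1) (u, v, 0) _ ?_ ?_ ?_ ?_ ?_ h2 h h3 h' ?_ ?_ ?_ ?_ <;>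
      simp [dt] <;> first | positivity | (refine ⟨?_, ?_, ?_, ?_⟩ <;> positivity) | (refine ⟨?_, ?_, ?_⟩ <;> positivity) | grind
  have one := one_pos (α := ℝ)
  have hB1 := pB 1 1 1 one one one h0
  have hsum : ∀ v w : ℝ, 0 < v → 0 < w → Q (1, v, 0) → Q (0, w, 1) → Q (1, v + w, 1) := by
    intro v w hv hw h h'
    refine hcl' (1, v, 0) (0, w, 1) (0, 1, 0) (1, 0, 1) _ ?_ ?_ ?_ ?_ ?_ h h' h2 hB1 ?_ ?_ ?_ ?_ <;>
      simp [dt] <;> first | positivity | (refine ⟨?_, ?_, ?_, ?_⟩ <;> positivity) | (refine ⟨?_, ?_, ?_⟩ <;> positivity) | grind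
  have nat : ∀ n : ℕ, Q (1, (n : ℝ) + 1, 1) := by
    intro n
    induction n with
    | zero => simpa using h0
    | succ n ih =>
      push_cast
      exact hsum _ _ (by positivity) one (pC _ _ _ one (by positivity) one ih) (pA _ _ _ one one one h0)
  have nat' : ∀ n : ℕ, 0 < n → Q (1, (n : ℝ), 1) := by
    intro n hn
    obtain ⟨m, rfl⟩ := Nat.exists_eq_succ_of_ne_zero hn.ne'
    simpa using nat m
  -- integer points
  have int1 : ∀ n m : ℕ, 0 < n → 0 < m → Q ((m : ℝ), n * m, n) := by
    intro n m hn hm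
    have hn' : (0 : ℝ) < n := by exact_mod_cast hn
    have hm' : (0 : ℝ) < m := by exact_mod_cast hm
    apply rAC _ _ _ hm' (by positivity) hn'
    · have := hsc n _ hn'.ne' (pA _ _ _ one hm' one (nat' m hm))
      simpa using this
    · have := hsc m _ hm'.ne' (pC _ _ _ one hn' one (nat' n hn))
      simpa [mul_comm] using this
  have intG : ∀ n m : ℕ, 0 < n → 0 < m → Q ((m : ℝ), 0, n) := by
    intro n m hn hm
    have hn' : (0 : ℝ) < n := by exact_mod_cast hn
    have hm' : (0 : ℝ) < m := by exact_mod_cast hm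
    exact pB _ _ _ hm' (by positivity) hn' (int1 n m hn hm)
  have intE : ∀ n m : ℕ, 0 < n → 0 < m → Q ((m : ℝ), n, 0) := by
    intro n m hn hm
    have hn' : (0 : ℝ) < n := by exact_mod_cast hn
    have hm' : (0 : ℝ) < m := by exact_mod_cast hm
    apply pC _ _ n hm' hn' hn'
    apply rAB _ _ _ hm' hn' hn' _ (intG n m hn hm)
    simpa using hsc n _ hn'.ne' (pA _ _ _ one one one h0)
  have intP : ∀ n m k : ℕ, 0 < n → 0 < m → 0 < k → Q ((n : ℝ), m, k) := by
    intro n m k hn hm hk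
    exact rBC _ _ _ (by exact_mod_cast hn) (by exact_mod_cast hm) (by exact_mod_cast hk)
      (intG k n hk hn) (intE m n hm hn)
  -- positive rational points
  have ratP : ∀ u v w : ℚ, 0 < u → 0 < v → 0 < w → Q ((u : ℝ), v, w) := by
    intro u v w hu hv hw
    have hu' := Rat.num_pos.2 hu
    have hv' := Rat.num_pos.2 hv
    have hw' := Rat.num_pos.2 hw
    have du := u.den_pos
    have dv := v.den_pos
    have dw := w.den_pos
    have := intP (u.num.toNat * v.den * w.den) (v.num.toNat * u.den * w.den)
      (w.num.toNat * u.den * v.den) (by have : 0 < u.num.toNat := by lia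
                                        positivity)
      (by have : 0 < v.num.toNat := by lia
          positivity) (by have : 0 < w.num.toNat := by lia
                          positivity)
    have du' : (u.den : ℝ) ≠ 0 := by exact_mod_cast du.ne'
    have dv' : (v.den : ℝ) ≠ 0 := by exact_mod_cast dv.ne'
    have dw' : (w.den : ℝ) ≠ 0 := by exact_mod_cast dw.ne'
    have h5 := hsc ((u.den : ℝ) * v.den * w.den)⁻¹ _ (by positivity) this
    have e : ∀ r : ℚ, 0 < r.num → (r : ℝ) = (r.num.toNat : ℝ) / r.den := by
      intro r hr
      have : ((r.num.toNat : ℤ) : ℝ) = (r.num : ℝ) := by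
        rw [Int.toNat_of_nonneg hr.le]
      rw [Int.cast_natCast] at this
      rw [this]
      exact Rat.cast_def r
    rw [e u hu', e v hv', e w hw']
    convert h5 using 1
    simp only [Prod.smul_mk, smul_eq_mul, Prod.mk.injEq]
    push_cast
    refine ⟨?_, ?_, ?_⟩ <;> field_simp
  by_cases h00 : x = 0 ∧ y = 0
  · obtain ⟨rfl, rfl⟩ := h00
    have hz : (z : ℝ) ≠ 0 := by
      intro h
      apply hne
      have : z = 0 := by exact_mod_cast h
      rw [this]
    simpa using hsc z _ hz h3
  obtain ⟨p, hp, hpx⟩ : ∃ p : ℚ, 0 < p ∧ x * p - y ≠ 0 := by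
    by_cases h : x * 1 - y = 0
    · refine ⟨2, by norm_num, fun h' => h00 ⟨by linarith, by linarith⟩⟩
    · exact ⟨1, by norm_num, h⟩
  have hpx' : (x : ℝ) * p - y ≠ 0 := by exact_mod_cast hpx
  obtain ⟨N, hN0, hNx, hNy, hNz⟩ : ∃ N : ℚ, 0 < N ∧ 0 < x + N ∧ 0 < y + N * p ∧ 0 < z + N := by
    refine ⟨|x| + |y| / p + |z| + 1, by positivity, ?_, ?_, ?_⟩
    · have := neg_abs_le x
      have : 0 ≤ |y| / p := by positivity
      have := abs_nonneg z
      linarith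
    · have := neg_abs_le y
      have : (|x| + |y| / p + |z| + 1) * p = |y| + (|x| + |z| + 1) * p := by field_simp; ring
      have : 0 < (|x| + |z| + 1) * p := by positivity
      linarith
    · have := neg_abs_le z
      have : 0 ≤ |y| / p := by positivity
      have := abs_nonneg x
      linarith
  have pos : ∀ M k : ℚ, N ≤ M → 1 ≤ k → Q ((x + M : ℝ), y + M * p, z + M * k) ∧
      s ((x + M : ℝ), y + M * p, z + M * k) ≠ 0 := by
    intro M k hM hk
    have a1 : 0 < x + M := by linarith
    have a2 : 0 < y + M * p := by nlinarith
    have a3 : 0 < z + M * k := by nlinarith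
    have b1 : 0 < (x + M : ℝ) := by exact_mod_cast a1
    have b2 : 0 < (y + M * p : ℝ) := by exact_mod_cast a2
    have b3 : 0 < (z + M * k : ℝ) := by exact_mod_cast a3
    constructor
    · have := ratP _ _ _ a1 a2 a3
      push_cast at this
      exact this
    · apply hs <;> simp only <;> positivity
  obtain ⟨q1, s1⟩ := pos N 1 le_rfl le_rfl
  obtain ⟨q2, s2⟩ := pos (N + 1) 1 (by linarith) le_rfl
  obtain ⟨q3, s3⟩ := pos N 2 le_rfl (by norm_num)
  obtain ⟨q4, s4⟩ := pos (N + 1) 2 (by linarith) (by norm_num)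
  have hN' : (N : ℝ) ≠ 0 := by exact_mod_cast hN0.ne'
  refine hcl _ _ _ _ _ s1 s2 s3 s4 hxyz q1 q2 q3 q4 ?_ ?_ ?_ ?_
  · simp [dt]; ring
  · simp [dt]; ring
  · have := mul_ne_zero hN' hpx'
    contrapose! this
    rw [← this]
    simp [dt]; ring
  · have := mul_ne_zero hN' hpx'
    contrapose! this
    rw [← neg_eq_zero, ← this]
    simp [dt]; ring

lemma interior_dense {U : Set (ℝ × ℝ)} (hU : interT U ⊆ U) {a b c d : ℝ × ℝ} {α β γ : ℝ}
    (ha : a ∈ U) (hb : b ∈ U) (hc : c ∈ U) (hd : d ∈ U) (hα : 0 < α) (hβ : 0 < β) (hγ : 0 < γ)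
    (hd1 : (α + β + γ) * d.1 = α * a.1 + β * b.1 + γ * c.1)
    (hd2 : (α + β + γ) * d.2 = α * a.2 + β * b.2 + γ * c.2)
    (hD : cr a b c ≠ 0) : Dense U := by
  set A : ℝ × ℝ × ℝ := (α * a.1, α * a.2, α) with hA
  set B : ℝ × ℝ × ℝ := (β * b.1, β * b.2, β) with hB
  set C : ℝ × ℝ × ℝ := (γ * c.1, γ * c.2, γ) with hC
  have hdt : dt A B C = α * β * γ * cr a b c := by
    simp [hA, hB, hC, dt, cr]
    ring
  have hdt0 : dt A B C ≠ 0 := by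
    rw [hdt]
    positivity
  have key : ∀ x y z : ℚ, (hom A B C (x, y, z)).2.2 ≠ 0 → proj (hom A B C (x, y, z)) ∈ U := by
    intro x y z hs
    refine rat_closure (fun v => proj (hom A B C v) ∈ U) (fun v => (hom A B C v).2.2)
      ?_ ?_ ?_ ?_ ?_ ?_ ?_ x y z hs ?_
    · rintro ⟨u, v, w⟩ hu hv hw h
      simp only at hu hv hw h
      simp only [hom, hA, hB, hC, Prod.smul_mk, Prod.mk_add_mk, smul_eq_mul]
      intro h0
      have e1 := mul_nonneg hu hα.le
      have e2 := mul_nonneg hv hβ.le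
      have e3 := mul_nonneg hw hγ.le
      have f1 : u * α = 0 := by linarith
      have f2 : v * β = 0 := by linarith
      have f3 : w * γ = 0 := by linarith
      have g1 := (mul_eq_zero.1 f1).resolve_right hα.ne'
      have g2 := (mul_eq_zero.1 f2).resolve_right hβ.ne'
      have g3 := (mul_eq_zero.1 f3).resolve_right hγ.ne'
      linarith
    · intro k v hk hv
      have : hom A B C (k • v) = k • hom A B C v := by
        simp [hom, smul_smul]
      simp only [this, proj_smul hk]
      exact hv
    · intro p q r t x sp sq sr st sx hp hq hr ht e1 e2 e3 e4
      apply hU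
      have z : ∀ p q r : ℝ × ℝ × ℝ, (hom A B C p).2.2 ≠ 0 → (hom A B C q).2.2 ≠ 0 →
          (hom A B C r).2.2 ≠ 0 → (cr (proj (hom A B C p)) (proj (hom A B C q))
            (proj (hom A B C r)) = 0 ↔ dt p q r = 0) := by
        intro p q r sp sq sr
        have h := cr_proj sp sq sr
        rw [dt_hom] at h
        constructor
        · intro h'
          rw [h', zero_mul] at h
          exact (mul_eq_zero.1 h.symm).resolve_left hdt0
        · intro h'
          rw [h', mul_zero] at h
          exact (mul_eq_zero.1 h).resolve_right (mul_ne_zero (mul_ne_zero sp sq) sr)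
      exact close_mem hp hq hr ht ((z _ _ _ sp sq sx).2 e1) ((z _ _ _ sr st sx).2 e2)
        (mt (z _ _ _ sp sq sr).1 e3) (mt (z _ _ _ sr st sp).1 e4)
    · have : proj (hom A B C (1, 0, 0)) = a := by
        simp [proj, hom, hA, hα.ne']
      simpa only [this] using ha
    · have : proj (hom A B C (0, 1, 0)) = b := by
        simp [proj, hom, hB, hβ.ne']
      simpa only [this] using hb
    · have : proj (hom A B C (0, 0, 1)) = c := by
        simp [proj, hom, hC, hγ.ne']
      simpa only [this] using hc
    · have hs : α + β + γ ≠ 0 := by positivity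
      have : proj (hom A B C (1, 1, 1)) = d := by
        apply Prod.ext
        · simp only [proj, hom, hA, hB, hC, one_smul, Prod.mk_add_mk]
          rw [← hd1]; field_simp
        · simp only [proj, hom, hA, hB, hC, one_smul, Prod.mk_add_mk]
          rw [← hd2]; field_simp
      simpa only [this] using hd
    · intro h
      apply hs
      simp only [Prod.mk.injEq] at h
      obtain ⟨rfl, rfl, rfl⟩ := h
      simp [hom]
  intro y
  rw [mem_closure_iff_nhds]
  intro N hN
  set v : ℝ × ℝ × ℝ :=
    (cr b c y / (α * cr a b c), cr c a y / (β * cr a b c), cr a b y / (γ * cr a b c)) with hv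
  have hhom : hom A B C v = (y.1, y.2, 1) := by
    simp only [hom, hA, hB, hC, hv, Prod.smul_mk, Prod.mk_add_mk, smul_eq_mul, Prod.mk.injEq]
    refine ⟨?_, ?_, ?_⟩
    · field_simp
      simp only [cr]; ring
    · field_simp
      simp only [cr]; ring
    · field_simp
      simp only [cr]; ring
  have hhc : Continuous (hom A B C) := by
    unfold hom
    fun_prop
  have hsv : (hom A B C v).2.2 ≠ 0 := by rw [hhom]; simp
  have hcont : ContinuousAt (fun v => proj (hom A B C v)) v := by
    unfold proj
    have h1 : ContinuousAt (fun v => (hom A B C v).1) v := by fun_prop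
    have h2 : ContinuousAt (fun v => (hom A B C v).2.1) v := by fun_prop
    have h3 : ContinuousAt (fun v => (hom A B C v).2.2) v := by fun_prop
    exact (h1.div h3 hsv).prodMk (h2.div h3 hsv)
  have hval : proj (hom A B C v) = y := by
    rw [hhom]; simp [proj]
  have n1 : (fun v => proj (hom A B C v)) ⁻¹' N ∈ nhds v := by
    apply hcont
    simp only [hval]
    exact hN
  have n2 : {w | (hom A B C w).2.2 ≠ 0} ∈ nhds v := by
    apply IsOpen.mem_nhds _ hsv
    exact isOpen_ne_fun (by fun_prop) continuous_const
  have hdense : DenseRange (Prod.map ((↑) : ℚ → ℝ) (Prod.map ((↑) : ℚ → ℝ) ((↑) : ℚ → ℝ))) :=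
    (Rat.denseRange_cast).prodMap ((Rat.denseRange_cast).prodMap (Rat.denseRange_cast))
  obtain ⟨w, ⟨hw1, hw2⟩, ⟨⟨q1, q2, q3⟩, rfl⟩⟩ :=
    mem_closure_iff_nhds.1 (hdense v) _ (Filter.inter_mem n1 n2)
  exact ⟨_, hw1, key q1 q2 q3 hw2⟩

lemma convex_dense {U : Set (ℝ × ℝ)} (hU : interT U ⊆ U) {a b c d : ℝ × ℝ} {α β γ : ℝ}
    (ha : a ∈ U) (hb : b ∈ U) (hc : c ∈ U) (hd : d ∈ U) (hα : α < 0) (hβ : 0 < β) (hγ : 0 < γ)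
    (hsum : α + β + γ = 1)
    (hd1 : d.1 = α * a.1 + β * b.1 + γ * c.1)
    (hd2 : d.2 = α * a.2 + β * b.2 + γ * c.2)
    (hD : cr a b c ≠ 0) (hγ1 : γ ≠ 1) : Dense U := by
  have hα' : α = 1 - β - γ := by linarith
  have hg : 1 - γ ≠ 0 := fun h => hγ1 (by linarith)
  have hbg : β + γ ≠ 0 := by positivity
  obtain ⟨m, hm1, hm2⟩ : ∃ m : ℝ × ℝ, (β + γ) * m.1 = β * b.1 + γ * c.1 ∧
      (β + γ) * m.2 = β * b.2 + γ * c.2 :=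
    ⟨((β * b.1 + γ * c.1) / (β + γ), (β * b.2 + γ * c.2) / (β + γ)), by simp only; field_simp,
      by simp only; field_simp⟩
  obtain ⟨e, he1, he2⟩ : ∃ e : ℝ × ℝ, (1 - γ) * e.1 = α * a.1 + β * b.1 ∧
      (1 - γ) * e.2 = α * a.2 + β * b.2 :=
    ⟨((α * a.1 + β * b.1) / (1 - γ), (α * a.2 + β * b.2) / (1 - γ)), by simp only; field_simp,
      by simp only; field_simp⟩
  have hmU : m ∈ U := by
    apply hU
    refine close_mem hb hc ha hd (x := m) ?_ ?_ ?_ ?_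
    · have : (β + γ) * cr b c m = 0 := by
        simp only [cr]
        linear_combination (c.1 - b.1) * hm2 - (c.2 - b.2) * hm1
      exact (mul_eq_zero.1 this).resolve_left hbg
    · have : (β + γ) * cr a d m = 0 := by
        simp only [cr]
        rw [hd1, hd2, hα']
        linear_combination ((1 - β - γ) * a.1 + β * b.1 + γ * c.1 - a.1) * hm2
          - ((1 - β - γ) * a.2 + β * b.2 + γ * c.2 - a.2) * hm1
      exact (mul_eq_zero.1 this).resolve_left hbg
    · contrapose! hD
      rw [← hD]; simp only [cr]; ring
    · have : cr a d b = - γ * cr a b c := by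
        simp only [cr]
        rw [hd1, hd2, hα']
        ring
      rw [this]
      exact mul_ne_zero (by linarith) hD
  have heU : e ∈ U := by
    apply hU
    refine close_mem ha hb hc hd (x := e) ?_ ?_ ?_ ?_
    · have : (1 - γ) * cr a b e = 0 := by
        simp only [cr]
        rw [hα'] at he1 he2
        linear_combination (b.1 - a.1) * he2 - (b.2 - a.2) * he1
      exact (mul_eq_zero.1 this).resolve_left hg
    · have : (1 - γ) * cr c d e = 0 := by
        simp only [cr]
        rw [hd1, hd2]
        rw [hα'] at he1 he2 ⊢
        linear_combination ((1 - β - γ) * a.1 + β * b.1 + γ * c.1 - c.1) * he2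
          - ((1 - β - γ) * a.2 + β * b.2 + γ * c.2 - c.2) * he1
      exact (mul_eq_zero.1 this).resolve_left hg
    · exact hD
    · have : cr c d a = -β * cr a b c := by
        simp only [cr]
        rw [hd1, hd2, hα']
        ring
      rw [this]
      exact mul_ne_zero (by linarith) hD
  rcases lt_or_gt_of_ne hγ1 with h | h
  · refine interior_dense hU ha hc heU hmU (α := -α) (β := γ) (γ := 1 - γ) (by linarith) hγ
      (by linarith) ?_ ?_ ?_
    · rw [hα'] at he1 ⊢
      linear_combination hm1 - he1
    · rw [hα'] at he2 ⊢
      linear_combination hm2 - he2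
    · have : (1 - γ) * cr a c e = - β * cr a b c := by
        simp only [cr]
        rw [hα'] at he1 he2
        linear_combination (c.1 - a.1) * he2 - (c.2 - a.2) * he1
      intro h0
      rw [h0, mul_zero] at this
      exact mul_ne_zero (by linarith) hD this.symm
  · refine interior_dense hU hb hd heU hmU (α := β) (β := 1) (γ := γ - 1) hβ one_pos
      (by linarith) ?_ ?_ ?_
    · rw [hα'] at he1 hd1
      linear_combination hm1 + he1 - hd1
    · rw [hα'] at he2 hd2
      linear_combination hm2 + he2 - hd2
    · have : (1 - γ) * cr b d e = α * γ * cr a b c := by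
        simp only [cr]
        rw [hd1, hd2]
        rw [hα'] at he1 he2 ⊢
        linear_combination ((1 - β - γ) * a.1 + β * b.1 + γ * c.1 - b.1) * he2
          - ((1 - β - γ) * a.2 + β * b.2 + γ * c.2 - b.2) * he1
      intro h0
      rw [h0, mul_zero] at this
      exact mul_ne_zero (mul_ne_zero hα.ne hγ.ne') hD this.symm

lemma convex_dense' {U : Set (ℝ × ℝ)} (hU : interT U ⊆ U) {a b c d : ℝ × ℝ} {α β γ : ℝ}
    (ha : a ∈ U) (hb : b ∈ U) (hc : c ∈ U) (hd : d ∈ U) (hα : α < 0) (hβ : 0 < β) (hγ : 0 < γ)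
    (hsum : α + β + γ = 1)
    (hd1 : d.1 = α * a.1 + β * b.1 + γ * c.1)
    (hd2 : d.2 = α * a.2 + β * b.2 + γ * c.2)
    (hD : cr a b c ≠ 0) (hne : d ≠ b + c - a) : Dense U := by
  by_cases h : γ = 1
  · refine convex_dense hU ha hc hb hd hα hγ hβ (by linarith) (by linarith) (by linarith) ?_ ?_
    · contrapose! hD
      rw [← neg_eq_zero, ← hD]; simp only [cr]; ring
    · intro h'
      apply hne
      have : α = -1 := by linarith
      subst h h' this
      apply Prod.ext
      · simp only [hd1, Prod.fst_sub, Prod.fst_add]; ring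
      · simp only [hd2, Prod.snd_sub, Prod.snd_add]; ring
  · exact convex_dense hU ha hb hc hd hα hβ hγ hsum hd1 hd2 hD h

lemma quad_dense {U : Set (ℝ × ℝ)} (hU : interT U ⊆ U) {a b c d : ℝ × ℝ}
    (ha : a ∈ U) (hb : b ∈ U) (hc : c ∈ U) (hd : d ∈ U)
    (hD : cr a b c ≠ 0) (hA : cr b c d ≠ 0) (hB : cr c a d ≠ 0) (hC : cr a b d ≠ 0)
    (n1 : d ≠ b + c - a) (n2 : d ≠ c + a - b) (n3 : d ≠ a + b - c) : Dense U := by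
  obtain ⟨α, hα⟩ : ∃ α, α = cr b c d / cr a b c := ⟨_, rfl⟩
  obtain ⟨β, hβ⟩ : ∃ β, β = cr c a d / cr a b c := ⟨_, rfl⟩
  obtain ⟨γ, hγ⟩ : ∃ γ, γ = cr a b d / cr a b c := ⟨_, rfl⟩
  have hD1 : cr b c a ≠ 0 := by
    contrapose! hD; rw [← hD]; simp only [cr]; ring
  have hD2 : cr c a b ≠ 0 := by
    contrapose! hD; rw [← hD]; simp only [cr]; ring
  have hsum : α + β + γ = 1 := by
    rw [hα, hβ, hγ]; field_simp; simp only [cr]; ring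
  have hd1 : d.1 = α * a.1 + β * b.1 + γ * c.1 := by
    rw [hα, hβ, hγ]; field_simp; simp only [cr]; ring
  have hd2 : d.2 = α * a.2 + β * b.2 + γ * c.2 := by
    rw [hα, hβ, hγ]; field_simp; simp only [cr]; ring
  have α0 : α ≠ 0 := by rw [hα]; exact div_ne_zero hA hD
  have β0 : β ≠ 0 := by rw [hβ]; exact div_ne_zero hB hD
  have γ0 : γ ≠ 0 := by rw [hγ]; exact div_ne_zero hC hD
  clear hα hβ hγ
  have hA' : cr d b c ≠ 0 := by
    contrapose! hA; rw [← hA]; simp only [cr]; ring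
  have hB' : cr d c a ≠ 0 := by
    contrapose! hB; rw [← hB]; simp only [cr]; ring
  have hC' : cr d a b ≠ 0 := by
    contrapose! hC; rw [← hC]; simp only [cr]; ring
  have s1 : α * a.1 = d.1 - β * b.1 - γ * c.1 := by linarith
  have s2 : α * a.2 = d.2 - β * b.2 - γ * c.2 := by linarith
  rcases lt_or_gt_of_ne α0 with hα | hα <;> rcases lt_or_gt_of_ne β0 with hβ | hβ <;>
    rcases lt_or_gt_of_ne γ0 with hγ | hγ
  · linarith
  · refine interior_dense hU hd ha hb hc (α := 1) (β := -α) (γ := -β) one_pos (by linarith)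
      (by linarith) ?_ ?_ hC'
    · linear_combination (-c.1) * hsum - hd1
    · linear_combination (-c.2) * hsum - hd2
  · refine interior_dense hU hd hc ha hb (α := 1) (β := -γ) (γ := -α) one_pos (by linarith)
      (by linarith) ?_ ?_ hB'
    · linear_combination (-b.1) * hsum - hd1
    · linear_combination (-b.2) * hsum - hd2
  · exact convex_dense' hU ha hb hc hd hα hβ hγ hsum hd1 hd2 hD n1
  · refine interior_dense hU hd hb hc ha (α := 1) (β := -β) (γ := -γ) one_pos (by linarith)
      (by linarith) ?_ ?_ hA'
    · linear_combination (-a.1) * hsum - hd1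
    · linear_combination (-a.2) * hsum - hd2
  · exact convex_dense' hU hb hc ha hd hβ hγ hα (by linarith) (by linarith) (by linarith) hD1 n2
  · exact convex_dense' hU hc ha hb hd hγ hα hβ (by linarith) (by linarith) (by linarith) hD2 n3
  · exact interior_dense hU ha hb hc hd hα hβ hγ (by rw [hsum]; linarith) (by rw [hsum]; linarith) hD

lemma infinite_dense {U : Set (ℝ × ℝ)} (hU : interT U ⊆ U) (hinf : U.Infinite) {a b c d : ℝ × ℝ}
    (ha : a ∈ U) (hb : b ∈ U) (hc : c ∈ U) (hd : d ∈ U)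
    (h1 : cr a b c ≠ 0) (h2 : cr a b d ≠ 0) (h3 : cr c d a ≠ 0) (h4 : cr c d b ≠ 0) : Dense U := by
  by_contra hnd
  have key : ∀ p ∈ U, ∀ q ∈ U, ∀ r ∈ U, ∀ x ∈ U, cr p q r ≠ 0 →
      x ∉ ({q + r - p, r + p - q, p + q - r} : Set (ℝ × ℝ)) →
      cr q r x = 0 ∨ cr r p x = 0 ∨ cr p q x = 0 := by
    intro p hp q hq r hr x hx h hF
    by_contra! hcon
    simp only [mem_insert_iff, mem_singleton_iff, not_or] at hF
    exact hnd (quad_dense hU hp hq hr hx h hcon.1 hcon.2.1 hcon.2.2 hF.1 hF.2.1 hF.2.2)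
  set F : Set (ℝ × ℝ) := {b + c - a, c + a - b, a + b - c} ∪ {d + a - c, a + c - d, c + d - a} ∪
    {a + b - d, b + d - a, d + a - b} ∪ interT {a, b, c, d} with hF
  have hFfin : F.Finite := by
    refine Set.Finite.union (Set.Finite.union (Set.Finite.union ?_ ?_) ?_) (interT_finite ?_) <;>
      exact Set.toFinite _
  obtain ⟨x, hxU, hxF⟩ := (hinf.sdiff hFfin).nonempty
  simp only [hF, mem_union, not_or] at hxF
  obtain ⟨⟨⟨f1, f2⟩, f3⟩, f4⟩ := hxF
  have k1 := key a ha b hb c hc x hxU h1 f1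
  have k2 := key c hc d hd a ha x hxU h3 f2
  have h5 : cr d a b ≠ 0 := by
    contrapose! h2; rw [← h2]; simp only [cr]; ring
  have k3 := key d hd a ha b hb x hxU h5 f3
  have ma : a ∈ ({a, b, c, d} : Set (ℝ × ℝ)) := by simp
  have mb : b ∈ ({a, b, c, d} : Set (ℝ × ℝ)) := by simp
  have mc : c ∈ ({a, b, c, d} : Set (ℝ × ℝ)) := by simp
  have md : d ∈ ({a, b, c, d} : Set (ℝ × ℝ)) := by simp
  have aux : ∀ p ∈ ({a, b, c, d} : Set (ℝ × ℝ)), ∀ q ∈ ({a, b, c, d} : Set (ℝ × ℝ)),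
      ∀ r ∈ ({a, b, c, d} : Set (ℝ × ℝ)), ∀ s ∈ ({a, b, c, d} : Set (ℝ × ℝ)),
      cr p q x = 0 → cr r s x = 0 → cr p q r ≠ 0 → cr r s p ≠ 0 → False :=
    fun p hp q hq r hr s hs e1 e2 e3 e4 => f4 (close_mem hp hq hr hs e1 e2 e3 e4)
  have nz : ∀ {u v : ℝ}, v ≠ 0 → u ^ 2 = v ^ 2 → u ≠ 0 := by
    rintro u v hv h rfl
    exact hv (by simpa using h.symm)
  rcases k1 with k | k | k
  · rcases k2 with l | l | l
    · refine aux b mb c mc d md a ma k l ?_ ?_ <;>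
      first
      | assumption
      | exact nz h1 (by simp only [cr]; ring1)
      | exact nz h2 (by simp only [cr]; ring1)
      | exact nz h3 (by simp only [cr]; ring1)
      | exact nz h4 (by simp only [cr]; ring1)
    · refine aux b mb c mc a ma c mc k l ?_ ?_ <;>
      first
      | assumption
      | exact nz h1 (by simp only [cr]; ring1)
      | exact nz h2 (by simp only [cr]; ring1)
      | exact nz h3 (by simp only [cr]; ring1)
      | exact nz h4 (by simp only [cr]; ring1)
    · refine aux b mb c mc d md c mc k (by simp only [cr] at l ⊢; linarith) ?_ ?_ <;>
      first
      | assumption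
      | exact nz h1 (by simp only [cr]; ring1)
      | exact nz h2 (by simp only [cr]; ring1)
      | exact nz h3 (by simp only [cr]; ring1)
      | exact nz h4 (by simp only [cr]; ring1)
  · rcases k3 with l | l | l
    · refine aux c mc a ma b mb a ma k (by simp only [cr] at l ⊢; linarith) ?_ ?_ <;>
      first
      | assumption
      | exact nz h1 (by simp only [cr]; ring1)
      | exact nz h2 (by simp only [cr]; ring1)
      | exact nz h3 (by simp only [cr]; ring1)
      | exact nz h4 (by simp only [cr]; ring1)
    · refine aux c mc a ma b mb d md k l ?_ ?_ <;>
      first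
      | assumption
      | exact nz h1 (by simp only [cr]; ring1)
      | exact nz h2 (by simp only [cr]; ring1)
      | exact nz h3 (by simp only [cr]; ring1)
      | exact nz h4 (by simp only [cr]; ring1)
    · refine aux c mc a ma d md a ma k l ?_ ?_ <;>
      first
      | assumption
      | exact nz h1 (by simp only [cr]; ring1)
      | exact nz h2 (by simp only [cr]; ring1)
      | exact nz h3 (by simp only [cr]; ring1)
      | exact nz h4 (by simp only [cr]; ring1)
  · rcases k2 with l | l | l
    · refine aux b mb a ma d md a ma (by simp only [cr] at k ⊢; linarith) l ?_ ?_ <;>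
      first
      | assumption
      | exact nz h1 (by simp only [cr]; ring1)
      | exact nz h2 (by simp only [cr]; ring1)
      | exact nz h3 (by simp only [cr]; ring1)
      | exact nz h4 (by simp only [cr]; ring1)
    · refine aux b mb a ma c mc a ma (by simp only [cr] at k ⊢; linarith) (by simp only [cr] at l ⊢; linarith) ?_ ?_ <;>
      first
      | assumption
      | exact nz h1 (by simp only [cr]; ring1)
      | exact nz h2 (by simp only [cr]; ring1)
      | exact nz h3 (by simp only [cr]; ring1)
      | exact nz h4 (by simp only [cr]; ring1)
    · refine aux a ma b mb c mc d md k l ?_ ?_ <;>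
      first
      | assumption
      | exact nz h1 (by simp only [cr]; ring1)
      | exact nz h2 (by simp only [cr]; ring1)
      | exact nz h3 (by simp only [cr]; ring1)
      | exact nz h4 (by simp only [cr]; ring1)

/-- A finite set `S ⊆ ℝ²` has infinite order under `T` (the iterates never stabilize)
if and only if `⋃ i, Tⁱ(S)` is dense in the plane. -/
theorem infinite_order_iff_dense (S : Set (ℝ × ℝ)) (hS : S.Finite) :
    (∀ n : ℕ, interT^[n + 1] S ≠ interT^[n] S) ↔ Dense (⋃ i, interT^[i] S) := by
  have hfin : ∀ n, (interT^[n] S).Finite := by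
    intro n
    induction n with
    | zero => exact hS
    | succ n ih =>
      rw [Function.iterate_succ_apply']
      exact interT_finite ih
  constructor
  · intro h
    have hne : ∀ n, (interT (interT^[n] S)).Nonempty := by
      intro n
      rw [Set.nonempty_iff_ne_empty]
      intro h0
      apply h (n + 1)
      rw [Function.iterate_succ_apply', Function.iterate_succ_apply', h0]
      ext x
      simp [interT]
    have hmono : Monotone fun n => interT^[n] S := by
      apply monotone_nat_of_le_succ
      intro n
      simp only [Function.iterate_succ_apply']
      exact subset_interT (hne n)
    have hU : interT (⋃ i, interT^[i] S) ⊆ ⋃ i, interT^[i] S := by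
      rintro x ⟨a, ha, b, hb, c, hc, d, hd, hx⟩
      simp only [mem_iUnion] at ha hb hc hd ⊢
      obtain ⟨i, ha⟩ := ha
      obtain ⟨j, hb⟩ := hb
      obtain ⟨k, hc⟩ := hc
      obtain ⟨l, hd⟩ := hd
      refine ⟨i + j + k + l + 1, ?_⟩
      rw [Function.iterate_succ_apply']
      exact ⟨a, hmono (by lia) ha, b, hmono (by lia) hb, c, hmono (by lia) hc,
        d, hmono (by lia) hd, hx⟩
    have hinf : (⋃ i, interT^[i] S).Infinite := by
      intro hf
      obtain ⟨n, hn⟩ := (hmono.directed_le).exists_mem_subset_of_finset_subset_biUnion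
        (s := hf.toFinset) (by simp)
      apply h n
      apply Subset.antisymm
      · intro x hx
        apply hn
        simp only [Finite.coe_toFinset, mem_iUnion]
        exact ⟨_, hx⟩
      · exact hmono (Nat.le_succ n)
    obtain ⟨x, hx, hxS⟩ : ∃ x, x ∈ interT S ∧ x ∉ S := by
      by_contra! hcon
      exact h 0 (Subset.antisymm hcon (subset_interT (hne 0)))
    obtain ⟨a, ha, b, hb, c, hc, d, hd, h1, h2, h3, h4⟩ := exists_quad hx hxS
    have hsub : S ⊆ ⋃ i, interT^[i] S := subset_iUnion (fun i => interT^[i] S) 0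
    exact infinite_dense hU hinf (hsub ha) (hsub hb) (hsub hc) (hsub hd) h1 h2 h3 h4
  · intro hd n hn
    have hstab : ∀ k, interT^[n + k] S = interT^[n] S := by
      intro k
      induction k with
      | zero => rfl
      | succ k ih =>
        rw [← add_assoc, Function.iterate_succ_apply', ih, ← Function.iterate_succ_apply' interT, hn]
    have hsub : (⋃ i, interT^[i] S) ⊆ ⋃ i ∈ Set.Iic n, interT^[i] S := by
      intro x hx
      simp only [mem_iUnion] at hx ⊢
      obtain ⟨i, hi⟩ := hx
      rcases le_total i n with h | h
      · exact ⟨i, h, hi⟩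
      · obtain ⟨k, rfl⟩ := Nat.exists_eq_add_of_le h
        exact ⟨n, Set.mem_Iic.2 le_rfl, hstab k ▸ hi⟩
    have hf : (⋃ i, interT^[i] S).Finite :=
      ((Set.finite_Iic n).biUnion fun i _ => hfin i).subset hsub
    have := hd.closure_eq
    rw [hf.isClosed.closure_eq] at this
    rw [this] at hf
    exact Set.infinite_univ hf
end
end

section
/- Let S be a finite set of points in ℝ² with T(S) = S. Then S is one of the following: (1) the empty set; (2) a set of collinear points together with one additional point not on their common line; (3) the four vertices of a nondegenerate parallelogram together with the intersection point of its two diagonals. -/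
open Set Filter

noncomputable section

/-- `A, B, C, D` are the vertices of a nondegenerate parallelogram:
`B - A = C - D ≠ 0` and `A, B, D` are not collinear. -/
def IsParallelogram (A B C D : ℝ × ℝ) : Prop :=
  B - A = C - D ∧ B - A ≠ 0 ∧ ¬ Collinear ℝ ({A, B, D} : Set (ℝ × ℝ))

/-- Signed double area of the triangle `a b c`. -/
def area (a b c : ℝ × ℝ) : ℝ :=
  (b.1 - a.1) * (c.2 - a.2) - (b.2 - a.2) * (c.1 - a.1)

/-- Closure under intersections, in parametric form. -/
def Clo (S : Set (ℝ × ℝ)) : Prop :=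
  ∀ a ∈ S, ∀ b ∈ S, ∀ c ∈ S, ∀ d ∈ S, ∀ x : ℝ × ℝ,
    (b.1 - a.1) * (d.2 - c.2) - (b.2 - a.2) * (d.1 - c.1) ≠ 0 →
    area a b x = 0 → area c d x = 0 → x ∈ S

lemma area_of_mem_line {a b x : ℝ × ℝ} (h : x ∈ line a b) : area a b x = 0 := by
  unfold line at h
  obtain ⟨r, rfl⟩ := (mem_affineSpan_pair_iff_exists_lineMap_eq).1 h
  simp only [area, AffineMap.lineMap_apply, vsub_eq_sub, vadd_eq_add, Prod.fst_add, Prod.snd_add,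
    Prod.smul_fst, Prod.smul_snd, Prod.fst_sub, Prod.snd_sub, smul_eq_mul]
  ring

lemma mem_line_of_area {a b x : ℝ × ℝ} (hab : a ≠ b) (h : area a b x = 0) : x ∈ line a b := by
  unfold line
  rw [mem_affineSpan_pair_iff_exists_lineMap_eq]
  have hab' : b.1 - a.1 ≠ 0 ∨ b.2 - a.2 ≠ 0 := by
    by_contra! hc
    exact hab (Prod.ext (by linarith [hc.1]) (by linarith [hc.2]))
  unfold area at h
  rcases hab' with h1 | h1
  · refine ⟨(x.1 - a.1) / (b.1 - a.1), ?_⟩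
    ext
    · simp [AffineMap.lineMap_apply]
      field_simp
      ring
    · simp [AffineMap.lineMap_apply]
      field_simp
      linarith
  · refine ⟨(x.2 - a.2) / (b.2 - a.2), ?_⟩
    ext
    · simp [AffineMap.lineMap_apply]
      field_simp
      linarith
    · simp [AffineMap.lineMap_apply]
      field_simp
      ring

lemma clo_of_fix {S : Set (ℝ × ℝ)} (h : interT S = S) : Clo S := by
  intro a ha b hb c hc d hd x hne h1 h2
  rw [← h]
  have hab : a ≠ b := by rintro rfl; simp at hne
  have hcd : c ≠ d := by rintro rfl; simp at hne
  refine ⟨a, ha, b, hb, c, hc, d, hd, hab, hcd, ?_, mem_line_of_area hab h1,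
    mem_line_of_area hcd h2⟩
  intro heq
  have hc' : c ∈ line a b := by rw [heq]; exact left_mem_affineSpan_pair ℝ c d
  have hd' : d ∈ line a b := by rw [heq]; exact right_mem_affineSpan_pair ℝ c d
  have e1 := area_of_mem_line hc'
  have e2 := area_of_mem_line hd'
  apply hne
  unfold area at e1 e2
  linarith

/-- No finite closed set contains two crossing nested pairs with common apex `X`. -/
lemma no_apex {S : Set (ℝ × ℝ)} (hS : S.Finite) (hC : Clo S) {X P Q M N : ℝ × ℝ}
    (hX : X ∈ S) (hP : P ∈ S) (hQ : Q ∈ S) (hM : M ∈ S) (hN : N ∈ S)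
    {s t : ℝ} (hs0 : 0 < s) (hs1 : s < 1) (ht0 : 0 < t) (ht1 : t < 1)
    (hQe : Q = X + s • (P - X)) (hNe : N = X + t • (M - X)) (hne : area X P M ≠ 0) : False := by
  let W : Set (ℝ × ℝ) := {M | M ∈ S ∧ area X P M ≠ 0 ∧
    ∃ t : ℝ, 0 < t ∧ t < 1 ∧ X + t • (M - X) ∈ S}
  have hW : W.Finite := hS.subset fun m hm => hm.1
  obtain ⟨m, ⟨hmS, hm0, r, hr0, hr1, hrS⟩, hmin⟩ :=
    Set.exists_min_image W (fun m => |area X P m|) hW ⟨M, hM, hne, t, ht0, ht1, hNe ▸ hN⟩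
  clear hNe hne hN hM ht0 ht1
  have k1 : 0 < 1 - s * r := by nlinarith
  have k2 : 0 < s * (1 - r) := mul_pos hs0 (by linarith)
  have k3 : 0 < r * (1 - s) := mul_pos hr0 (by linarith)
  have k4 : 0 < s + r - 2 * s * r := by linarith
  have k5 : 0 < 2 - s - r := by linarith
  have k6 : 0 < (1 - s) * (1 - r) := mul_pos (by linarith) (by linarith)
  set n := X + r • (m - X) with hn
  set V : ℝ × ℝ := (s * (1 - r)) • (P - X) + (r * (1 - s)) • (m - X) with hV
  have hO : X + (1 - s * r)⁻¹ • V ∈ S := by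
    apply hC P hP n hrS Q hQ m hmS
    · have : (n.1 - P.1) * (m.2 - Q.2) - (n.2 - P.2) * (m.1 - Q.1)
          = -(1 - s * r) * area X P m := by
        simp [hn, hQe, area]; ring
      rw [this]
      exact mul_ne_zero (by linarith) hm0
    · have hw := inv_mul_cancel₀ k1.ne'
      have e : area P n (X + (1 - s * r)⁻¹ • V)
          = -r * area X P m * ((1 - s * r)⁻¹ * (1 - s * r) - 1) := by
        simp [hn, hV, area]; ring
      rw [e, hw]; ring
    · simp [hQe, hV, area]; field_simp; ring
  have hM' : X + (s + r - 2 * s * r)⁻¹ • V ∈ S := by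
    apply hC X hX _ hO P hP m hmS
    · have : ((X + (1 - s * r)⁻¹ • V).1 - X.1) * (m.2 - P.2)
          - ((X + (1 - s * r)⁻¹ • V).2 - X.2) * (m.1 - P.1)
          = (s + r - 2 * s * r) / (1 - s * r) * area X P m := by
        simp [hV, area]; field_simp; ring
      rw [this]
      exact mul_ne_zero (by positivity) hm0
    · simp [area]; ring
    · have hw := inv_mul_cancel₀ k4.ne'
      have e : area P m (X + (s + r - 2 * s * r)⁻¹ • V)
          = -area X P m * ((s + r - 2 * s * r)⁻¹ * (s + r - 2 * s * r) - 1) := by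
        simp [hV, area]; ring
      rw [e, hw]; ring
  have hN' : X + (2 - s - r)⁻¹ • V ∈ S := by
    apply hC X hX _ hO Q hQ n hrS
    · have : ((X + (1 - s * r)⁻¹ • V).1 - X.1) * (n.2 - Q.2)
          - ((X + (1 - s * r)⁻¹ • V).2 - X.2) * (n.1 - Q.1)
          = s * r * (2 - s - r) / (1 - s * r) * area X P m := by
        simp [hV, hn, hQe, area]; field_simp; ring
      rw [this]
      exact mul_ne_zero (by positivity) hm0
    · simp [area]; ring
    · simp [hV, hn, hQe, area]; field_simp; ring
  have harea : area X P (X + (s + r - 2 * s * r)⁻¹ • V)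
      = (r * (1 - s)) / (s + r - 2 * s * r) * area X P m := by
    simp [hV, area]; field_simp; ring
  have hlt : (r * (1 - s)) / (s + r - 2 * s * r) < 1 := by
    rw [div_lt_one k4]; linarith
  have hpos : 0 < (r * (1 - s)) / (s + r - 2 * s * r) := by positivity
  have := hmin (X + (s + r - 2 * s * r)⁻¹ • V) ⟨hM', by rw [harea]; exact mul_ne_zero hpos.ne' hm0,
    (s + r - 2 * s * r) / (2 - s - r), by positivity, by rw [div_lt_one k5]; linarith, by
      convert hN' using 2
      rw [add_sub_cancel_left, smul_smul]
      congr 1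
      rw [div_mul_eq_mul_div, mul_inv_cancel₀ k4.ne', one_div]⟩
  simp only [harea, abs_mul, abs_of_pos hpos] at this
  have hm1 : 0 < |area X P m| := abs_pos.2 hm0
  nlinarith

/-- No point inside a triangle. -/
lemma no_int {S : Set (ℝ × ℝ)} (hS : S.Finite) (hC : Clo S) {A B C D : ℝ × ℝ}
    (hA : A ∈ S) (hB : B ∈ S) (hCS : C ∈ S) (hD : D ∈ S) (hne : area A B C ≠ 0)
    {x y z : ℝ} (hz : z = 1 - x - y) (hx0 : 0 < x) (hy0 : 0 < y) (hz0 : 0 < z)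
    (hDe : D = A + x • (B - A) + y • (C - A)) : False := by
  have h1 : A + (x / (z + x)) • (B - A) ∈ S := by
    apply hC A hA B hB C hCS D hD
    · have : (B.1 - A.1) * (D.2 - C.2) - (B.2 - A.2) * (D.1 - C.1) = -(z + x) * area A B C := by
        simp [hDe, hz, area]; ring
      rw [this]
      exact mul_ne_zero (by linarith) hne
    · simp [area]; ring
    · have : z + x ≠ 0 := by positivity
      simp [hDe, area]; field_simp; rw [hz]; ring
  have h2 : A + (y / (z + y)) • (C - A) ∈ S := by
    apply hC A hA C hCS B hB D hD
    · have : (C.1 - A.1) * (D.2 - B.2) - (C.2 - A.2) * (D.1 - B.1) = (z + y) * area A B C := by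
        simp [hDe, hz, area]; ring
      rw [this]
      exact mul_ne_zero (by linarith) hne
    · simp [area]; ring
    · have : z + y ≠ 0 := by positivity
      simp [hDe, area]; field_simp; rw [hz]; ring
  exact no_apex hS hC hA hB h1 hCS h2 (by positivity) (by rw [div_lt_one] <;> linarith)
    (by positivity) (by rw [div_lt_one] <;> linarith) rfl rfl hne

/-- Convex position: opposite sides are parallel. -/
lemma conv_par {S : Set (ℝ × ℝ)} (hS : S.Finite) (hC : Clo S) {A B C D : ℝ × ℝ}
    (hA : A ∈ S) (hB : B ∈ S) (hCS : C ∈ S) (hD : D ∈ S) (hne : area A B C ≠ 0)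
    {x y : ℝ} (hx0 : 0 < x) (hy0 : 0 < y) (hz0 : 1 < x + y)
    (hDe : D = A + x • (B - A) + y • (C - A)) : y = 1 := by
  by_contra hy1
  have hy2 : 1 - y ≠ 0 := fun h => hy1 (by linarith)
  have h1 : A + (x / (1 - y)) • (B - A) ∈ S := by
    apply hC A hA B hB C hCS D hD
    · have : (B.1 - A.1) * (D.2 - C.2) - (B.2 - A.2) * (D.1 - C.1) = -(1 - y) * area A B C := by
        simp [hDe, area]; ring
      rw [this]
      exact mul_ne_zero (neg_ne_zero.2 hy2) hne
    · simp [area]; ring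
    · simp [hDe, area]; field_simp; ring
  rcases lt_or_gt_of_ne hy1 with h | h
  · refine no_apex hS hC (s := (x + y - 1) / x) (t := y) h1 hA hB hCS hD
      (div_pos (by linarith) hx0) (by rw [div_lt_one hx0]; linarith) hy0 h ?_ ?_ ?_
    · ext <;> simp <;> field_simp <;> ring
    · ext <;> simp [hDe] <;> field_simp <;> ring
    · have : area (A + (x / (1 - y)) • (B - A)) A C = -(x / (1 - y)) * area A B C := by
        simp [area]; ring
      rw [this]
      exact mul_ne_zero (neg_ne_zero.2 (div_ne_zero hx0.ne' hy2)) hne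
  · have hxy : x + y - 1 ≠ 0 := by linarith
    refine no_apex hS hC (s := x / (x + y - 1)) (t := 1 / y) h1 hB hA hD hCS
      (div_pos hx0 (by linarith)) (by rw [div_lt_one (by linarith)]; linarith) (by positivity)
      (by rw [div_lt_one hy0]; exact h) ?_ ?_ ?_
    · ext <;> simp <;> field_simp <;> ring
    · ext <;> simp [hDe] <;> field_simp <;> ring
    · have : area (A + (x / (1 - y)) • (B - A)) B D = y * (1 - x / (1 - y)) * area A B C := by
        simp [hDe, area]; field_simp; ring
      rw [this]
      refine mul_ne_zero (mul_ne_zero hy0.ne' ?_) hne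
      rw [one_sub_div hy2]
      exact div_ne_zero (by intro hh; apply hxy; linarith) hy2

lemma exists_coords {A B C : ℝ × ℝ} (hne : area A B C ≠ 0) (D : ℝ × ℝ) :
    ∃ x y : ℝ, D = A + x • (B - A) + y • (C - A) := by
  refine ⟨area A D C / area A B C, area A B D / area A B C, ?_⟩
  ext
  · simp; field_simp; simp [area]; ring
  · simp; field_simp; simp [area]; ring

/-- Four points in general position form a parallelogram. -/
lemma par_of_gen {S : Set (ℝ × ℝ)} (hS : S.Finite) (hC : Clo S) {A B C D : ℝ × ℝ}
    (hA : A ∈ S) (hB : B ∈ S) (hCS : C ∈ S) (hD : D ∈ S) (hne : area A B C ≠ 0)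
    {x y : ℝ} (hDe : D = A + x • (B - A) + y • (C - A))
    (hx : x ≠ 0) (hy : y ≠ 0) (hz : x + y ≠ 1) :
    (x = 1 ∧ y = 1) ∨ (x = 1 ∧ y = -1) ∨ (x = -1 ∧ y = 1) := by
  have hne1 : area A C B ≠ 0 := by
    intro h; apply hne; unfold area at *; linarith
  have hne2 : area B A C ≠ 0 := by
    intro h; apply hne; unfold area at *; linarith
  have hne3 : area C A B ≠ 0 := by
    intro h; apply hne; unfold area at *; linarith
  have hne4 : area B C A ≠ 0 := by
    intro h; apply hne; unfold area at *; linarith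
  have hne5 : area C B A ≠ 0 := by
    intro h; apply hne; unfold area at *; linarith
  rcases lt_or_gt_of_ne hx with hx | hx <;> rcases lt_or_gt_of_ne hy with hy | hy
  · -- `A` is inside `D B C`
    exfalso
    have hz0 : 0 < 1 - x - y := by linarith
    refine no_int hS hC (A := D) (B := B) (C := C) (D := A) (x := -x / (1 - x - y))
      (y := -y / (1 - x - y)) (z := 1 / (1 - x - y)) hD hB hCS hA ?_ ?_
      (div_pos (by linarith) hz0) (div_pos (by linarith) hz0) (by positivity) ?_
    · have : area D B C = (1 - x - y) * area A B C := by simp [hDe, area]; ring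
      rw [this]; exact mul_ne_zero hz0.ne' hne
    · field_simp; ring
    · ext <;> simp [hDe] <;> field_simp <;> ring
  · rcases lt_or_gt_of_ne hz with hz | hz
    · -- weights: A positive, B negative, C positive : D = B + z(A-B) + y(C-B)
      right; right
      have e1 := conv_par hS hC hB hA hCS hD hne2 (x := 1 - x - y) (y := y) (by linarith) hy
        (by linarith) (by ext <;> simp [hDe] <;> ring)
      have e2 := conv_par hS hC hB hCS hA hD hne4 (x := y) (y := 1 - x - y) hy (by linarith)
        (by linarith) (by ext <;> simp [hDe] <;> ring)
      constructor <;> linarith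
    · -- A, B negative, `C` inside `D A B`
      exfalso
      refine no_int hS hC (A := D) (B := A) (C := B) (D := C) (x := -(1 - x - y) / y)
        (y := -x / y) (z := 1 / y) hD hA hB hCS ?_ ?_
        (div_pos (by linarith) hy) (div_pos (by linarith) hy) (by positivity) ?_
      · have : area D A B = y * area A B C := by simp [hDe, area]; ring
        rw [this]; exact mul_ne_zero hy.ne' hne
      · field_simp; ring
      · ext <;> simp [hDe] <;> field_simp <;> ring
  · rcases lt_or_gt_of_ne hz with hz | hz
    · right; left
      have e1 := conv_par hS hC hCS hA hB hD hne3 (x := 1 - x - y) (y := x) (by linarith) hx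
        (by linarith) (by ext <;> simp [hDe] <;> ring)
      have e2 := conv_par hS hC hCS hB hA hD hne5 (x := x) (y := 1 - x - y) hx (by linarith)
        (by linarith) (by ext <;> simp [hDe] <;> ring)
      constructor <;> linarith
    · exfalso
      refine no_int hS hC (A := D) (B := A) (C := C) (D := B) (x := -(1 - x - y) / x)
        (y := -y / x) (z := 1 / x) hD hA hCS hB ?_ ?_
        (div_pos (by linarith) hx) (div_pos (by linarith) hx) (by positivity) ?_
      · have : area D A C = -x * area A B C := by simp [hDe, area]; ring
        rw [this]; exact mul_ne_zero (by linarith) hne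
      · field_simp; ring
      · ext <;> simp [hDe] <;> field_simp <;> ring
  · rcases lt_or_gt_of_ne hz with hz | hz
    · exact (no_int hS hC hA hB hCS hD hne rfl hx hy (by linarith) hDe).elim
    · left
      have e1 := conv_par hS hC hA hB hCS hD hne hx hy hz hDe
      have e2 := conv_par hS hC hA hCS hB hD hne1 hy hx (by linarith)
        (by rw [hDe]; ext <;> simp <;> ring)
      exact ⟨e2, e1⟩

lemma final {S : Set (ℝ × ℝ)} (hS : S.Finite) (hC : Clo S) {A B C D : ℝ × ℝ}
    (hA : A ∈ S) (hB : B ∈ S) (hCS : C ∈ S) (hD : D ∈ S) (hne : area A B D ≠ 0)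
    (hpar : B - A = C - D) :
    ∃ A B C D : ℝ × ℝ, IsParallelogram A B C D ∧ S = {A, B, C, D, midpoint ℝ A C} := by
  have hAB : A ≠ B := by rintro rfl; simp [area] at hne
  refine ⟨A, B, C, D, ⟨hpar, sub_ne_zero.2 hAB.symm, ?_⟩, ?_⟩
  · intro hcol
    apply hne
    apply area_of_mem_line
    exact hcol.mem_affineSpan_of_mem_of_ne (p₁ := A) (p₂ := B) (p₃ := D) (by simp) (by simp)
      (by simp) hAB
  have hCe : C = A + (1:ℝ) • (B - A) + (1:ℝ) • (D - A) := by
    rw [eq_sub_iff_add_eq] at hpar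
    rw [← hpar]; ext <;> simp <;> ring
  have hO : midpoint ℝ A C = A + (1/2:ℝ) • (B - A) + (1/2:ℝ) • (D - A) := by
    rw [midpoint_eq_smul_add, hCe]
    ext <;> simp <;> ring
  apply Set.Subset.antisymm
  · intro E hE
    obtain ⟨x, y, hEe⟩ := exists_coords hne E
    rw [hO]
    -- four triples
    have t1 : x ≠ 0 → y ≠ 0 → x + y ≠ 1 → _ := par_of_gen hS hC hA hB hD hE hne hEe
    have t2 := par_of_gen hS hC (A := B) (B := C) (C := A) (D := E) hB hCS hA hE
      (by intro h; apply hne; rw [← h, hCe]; simp [area]; ring)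
      (x := y) (y := 1 - x) (by rw [hEe, hCe]; ext <;> simp <;> ring)
    have t3 := par_of_gen hS hC (A := C) (B := D) (C := B) (D := E) hCS hD hB hE
      (by intro h; apply hne; rw [← h, hCe]; simp [area]; ring)
      (x := 1 - x) (y := 1 - y) (by rw [hEe, hCe]; ext <;> simp <;> ring)
    have t4 := par_of_gen hS hC (A := D) (B := A) (C := C) (D := E) hD hA hCS hE
      (by intro h; apply hne; rw [← h, hCe]; simp [area]; ring)
      (x := 1 - y) (y := x) (by rw [hEe, hCe]; ext <;> simp <;> ring)
    have key : (x = 0 ∧ y = 0) ∨ (x = 1 ∧ y = 0) ∨ (x = 1 ∧ y = 1) ∨ (x = 0 ∧ y = 1) ∨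
        (x = 1/2 ∧ y = 1/2) := by
      clear hEe hO hCe
      grind
    rcases key with ⟨h1, h2⟩ | ⟨h1, h2⟩ | ⟨h1, h2⟩ | ⟨h1, h2⟩ | ⟨h1, h2⟩ <;>
      rw [h1, h2] at hEe
    · left; rw [hEe]; simp
    · right; left; rw [hEe]; simp
    · right; right; left; rw [hEe, hCe]
    · right; right; right; left; rw [hEe]; simp
    · right; right; right; right; exact hEe
  · rintro E (rfl | rfl | rfl | rfl | rfl)
    · exact hA
    · exact hB
    · exact hCS
    · exact hD
    · rw [hO]
      apply hC A hA C hCS B hB D hD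
      · intro h; apply hne
        have : (C.1 - A.1) * (D.2 - B.2) - (C.2 - A.2) * (D.1 - B.1) = 2 * area A B D := by
          rw [hCe]; simp [area]; ring
        linarith
      · rw [hCe]; simp [area]; ring
      · simp [area]; ring

/-- `S` contains four points in general position. -/
def Gen (S : Set (ℝ × ℝ)) : Prop :=
  ∃ a ∈ S, ∃ b ∈ S, ∃ c ∈ S, ∃ d ∈ S,
    area a b c ≠ 0 ∧ area a b d ≠ 0 ∧ area a c d ≠ 0 ∧ area b c d ≠ 0

lemma final_of_gen {S : Set (ℝ × ℝ)} (hS : S.Finite) (hC : Clo S) (hG : Gen S) :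
    ∃ A B C D : ℝ × ℝ, IsParallelogram A B C D ∧ S = {A, B, C, D, midpoint ℝ A C} := by
  obtain ⟨a, ha, b, hb, c, hc, d, hd, h1, h2, h3, h4⟩ := hG
  obtain ⟨x, y, hde⟩ := exists_coords h1 d
  have hx : x ≠ 0 := by
    rintro rfl; apply h3; rw [hde]; simp [area]; ring
  have hy : y ≠ 0 := by
    rintro rfl; apply h2; rw [hde]; simp [area]; ring
  have hz : x + y ≠ 1 := by
    intro h
    obtain rfl : y = 1 - x := by linarith
    apply h4; rw [hde]; simp [area]; ring
  rcases par_of_gen hS hC ha hb hc hd h1 hde hx hy hz with ⟨rfl, rfl⟩ | ⟨rfl, rfl⟩ | ⟨rfl, rfl⟩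
  · -- d = b + c - a
    exact final hS hC (A := a) (B := b) (C := d) (D := c) ha hb hd hc h1
      (by rw [hde]; ext <;> simp <;> ring)
  · -- d = a + b - c; parallelogram a c b d
    exact final hS hC (A := a) (B := c) (C := b) (D := d) ha hc hb hd h3
      (by rw [hde]; ext <;> simp <;> ring)
  · -- d = a + c - b
    exact final hS hC (A := a) (B := b) (C := c) (D := d) ha hb hc hd h2
      (by rw [hde]; ext <;> simp <;> ring)

lemma area_trans {p q x y : ℝ × ℝ} (hpq : p ≠ q) (hx : area p q x = 0) (hy : area p q y = 0) :
    area x y p = 0 := by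
  have h : q.1 - p.1 ≠ 0 ∨ q.2 - p.2 ≠ 0 := by
    by_contra! hc
    exact hpq (Prod.ext (by linarith [hc.1]) (by linarith [hc.2]))
  unfold area at *
  rcases h with h | h
  · apply mul_left_cancel₀ h
    linear_combination (x.1 - p.1) * hy - (y.1 - p.1) * hx
  · apply mul_left_cancel₀ h
    linear_combination (x.2 - p.2) * hy - (y.2 - p.2) * hx

lemma pencil {S : Set (ℝ × ℝ)} {a b p : ℝ × ℝ} (hp : p ∈ S)
    (hne : area a b p ≠ 0) (h : ∀ q ∈ S, q ≠ p → area a b q = 0) :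
    ∃ p ∈ S, Collinear ℝ (S \ {p}) ∧ p ∉ affineSpan ℝ (S \ {p}) := by
  have hab : a ≠ b := by rintro rfl; simp [area] at hne
  have hsub : S \ {p} ⊆ (line a b : Set (ℝ × ℝ)) := fun q hq =>
    mem_line_of_area hab (h q hq.1 hq.2)
  refine ⟨p, hp, ?_, fun hmem => hne (area_of_mem_line (affineSpan_le.2 hsub hmem))⟩
  have hcol : Collinear ℝ (line a b : Set (ℝ × ℝ)) := by
    unfold line
    rw [Collinear, ← direction_affineSpan, AffineSubspace.affineSpan_coe, direction_affineSpan]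
    exact collinear_pair ℝ a b
  exact hcol.subset hsub

lemma three_on_line {S : Set (ℝ × ℝ)} {a b c e : ℝ × ℝ} (ha : a ∈ S) (hb : b ∈ S) (hc : c ∈ S)
    (he : e ∈ S) (hne : area a c b ≠ 0) (hace : area a c e = 0) (hea : e ≠ a) (hec : e ≠ c) :
    Gen S ∨ ∃ p ∈ S, Collinear ℝ (S \ {p}) ∧ p ∉ affineSpan ℝ (S \ {p}) := by
  by_cases h : ∀ q ∈ S, q ≠ b → area a c q = 0
  · exact Or.inr (pencil hb hne h)
  left
  push Not at h
  obtain ⟨g, hg, hgb, hgne⟩ := h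
  have hac : a ≠ c := by rintro rfl; simp [area] at hne
  -- any two points u, v of line ac off line bg are good
  have good : ∀ u ∈ S, ∀ v ∈ S, u ≠ v → area a c u = 0 → area a c v = 0 →
      area b g u ≠ 0 → area b g v ≠ 0 → Gen S := by
    intro u hu v hv huv h1 h2 h3 h4
    have off : ∀ w, area a c w ≠ 0 → area w u v ≠ 0 := by
      intro w hw h0
      apply hw
      have e0 : area u v w = 0 := by rw [← h0]; unfold area; ring
      have e1 : area u v a = 0 := by exact area_trans hac h1 h2
      have e2 : area u v c = 0 := by
        refine area_trans (p := c) (q := a) hac.symm ?_ ?_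
        · have : area c a u = - area a c u := by unfold area; ring
          rw [this, h1, neg_zero]
        · have : area c a v = - area a c v := by unfold area; ring
          rw [this, h2, neg_zero]
      have e3 : area a c u = 0 := h1
      -- a, c, w all on line u v
      have huv' : v.1 - u.1 ≠ 0 ∨ v.2 - u.2 ≠ 0 := by
        by_contra! hc
        exact huv (Prod.ext (by linarith [hc.1]) (by linarith [hc.2]))
      unfold area at *
      rcases huv' with h | h
      · apply mul_left_cancel₀ h
        linear_combination (c.1 - a.1) * e0 - (c.1 - a.1) * e1 - (w.1 - a.1) * e2
          + (w.1 - a.1) * e1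
      · apply mul_left_cancel₀ h
        linear_combination (c.2 - a.2) * e0 - (c.2 - a.2) * e1 - (w.2 - a.2) * e2
          + (w.2 - a.2) * e1
    exact ⟨b, hb, g, hg, u, hu, v, hv, h3, h4, off b hne, off g hgne⟩
  have excl : ∀ u v, u ≠ v → area a c u = 0 → area a c v = 0 → area b g u = 0 →
      area b g v = 0 → False := by
    intro u v huv h1 h2 h3 h4
    have e0 : area u v b = 0 := area_trans hgb.symm h3 h4
    apply hne
    have e1 : area u v a = 0 := by exact area_trans hac h1 h2
    have e2 : area u v c = 0 := by
      refine area_trans (p := c) (q := a) hac.symm ?_ ?_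
      · have : area c a u = - area a c u := by unfold area; ring
        rw [this, h1, neg_zero]
      · have : area c a v = - area a c v := by unfold area; ring
        rw [this, h2, neg_zero]
    have huv' : v.1 - u.1 ≠ 0 ∨ v.2 - u.2 ≠ 0 := by
      by_contra! hc
      exact huv (Prod.ext (by linarith [hc.1]) (by linarith [hc.2]))
    unfold area at *
    rcases huv' with h | h
    · apply mul_left_cancel₀ h
      linear_combination (c.1 - a.1) * e0 - (c.1 - a.1) * e1 - (b.1 - a.1) * e2
        + (b.1 - a.1) * e1
    · apply mul_left_cancel₀ h
      linear_combination (c.2 - a.2) * e0 - (c.2 - a.2) * e1 - (b.2 - a.2) * e2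
        + (b.2 - a.2) * e1
  have haca : area a c a = 0 := by unfold area; ring
  have hacc : area a c c = 0 := by unfold area; ring
  by_cases k1 : area b g a = 0
  · exact good c hc e he hec.symm hacc hace (fun h => excl a c hac haca hacc k1 h)
      (fun h => excl a e hea.symm haca hace k1 h)
  · by_cases k2 : area b g c = 0
    · exact good a ha e he hea.symm haca hace k1 (fun h => excl c e hec.symm hacc hace k2 h)
    · exact good a ha c hc hac haca hacc k1 k2

lemma gen_or_pencil {S : Set (ℝ × ℝ)} {a b c : ℝ × ℝ} (ha : a ∈ S) (hb : b ∈ S) (hc : c ∈ S)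
    (hne : area a b c ≠ 0) :
    Gen S ∨ ∃ p ∈ S, Collinear ℝ (S \ {p}) ∧ p ∉ affineSpan ℝ (S \ {p}) := by
  by_cases h : ∀ q ∈ S, q ≠ c → area a b q = 0
  · exact Or.inr (pencil hc hne h)
  push Not at h
  obtain ⟨e, he, hec, hene⟩ := h
  have hea : e ≠ a := by rintro rfl; apply hene; unfold area; ring
  have heb : e ≠ b := by rintro rfl; apply hene; unfold area; ring
  by_cases k1 : area a c e = 0
  · exact three_on_line ha hb hc he (by intro h; apply hne; unfold area at *; linarith) k1 hea hec
  by_cases k2 : area b c e = 0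
  · exact three_on_line hb ha hc he (by intro h; apply hne; unfold area at *; linarith) k2 heb hec
  exact Or.inl ⟨a, ha, b, hb, c, hc, e, he, hne, hene, k1, k2⟩

/-- A finite set `S ⊆ ℝ²` fixed under `T` is the empty set, a collinear set together
with one additional point off its line, or the vertices of a nondegenerate
parallelogram together with the intersection of its diagonals. -/
theorem fixed_set_classification (S : Set (ℝ × ℝ)) (hS : S.Finite) (hfix : interT S = S) :
    S = ∅ ∨
    (∃ p ∈ S, Collinear ℝ (S \ {p}) ∧ p ∉ affineSpan ℝ (S \ {p})) ∨
    (∃ A B C D : ℝ × ℝ, IsParallelogram A B C D ∧ S = {A, B, C, D, midpoint ℝ A C}) := by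
  rcases S.eq_empty_or_nonempty with h | ⟨x, hx⟩
  · exact Or.inl h
  right
  have hC := clo_of_fix hfix
  rw [← hfix] at hx
  obtain ⟨a, ha, b, hb, c, hc, d, hd, hab, hcd, hl, -, -⟩ := hx
  have : Gen S ∨ ∃ p ∈ S, Collinear ℝ (S \ {p}) ∧ p ∉ affineSpan ℝ (S \ {p}) := by
    by_cases k1 : area a b c = 0
    · by_cases k2 : area a b d = 0
      · exfalso
        apply hl
        unfold line
        exact (affineSpan_pair_eq_of_mem_of_mem_of_ne (mem_line_of_area hab k1)
          (mem_line_of_area hab k2) hcd).symm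
      · exact gen_or_pencil ha hb hd k2
    · exact gen_or_pencil ha hb hc k1
  rcases this with h | h
  · exact Or.inr (final_of_gen hS hC h)
  · exact Or.inl h
end
end
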